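/- arXiv:2107.14268 — 3 statements merged into one kernel-verified Lean document; each statement's English description precedes it below -/
import Mathlib

section
/- Let K ∈ 𝓚 be a virtual transition matrix and let M ∈ ℕ₀. Then there exists a unique virtual distribution ν = (ν_N)_{N∈ℕ} ∈ 𝓓₁(K) such that ν_N is the point mass at M for every N ∈ ℕ with N ≥ M. -/
/-- `K` is a row-stochastic matrix on ℕ₀ = {0,1,2,...}. -/
def IsStochastic (K : ℕ → ℕ → ℝ) : Prop :=
  (∀ a b, 0 ≤ K a b) ∧ ∀ a, HasSum (K a) 1

/-- Membership in 𝒦_N: row-stochastic with `K a a = 1` for all `a ∉ {1,...,N}`. -/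
def MemKN (N : ℕ) (K : ℕ → ℕ → ℝ) : Prop :=
  IsStochastic K ∧ ∀ a : ℕ, ¬(1 ≤ a ∧ a ≤ N) → K a a = 1

/-- The projection P_N : 𝒦_{N+1} → 𝒦_N on transition matrices. -/
noncomputable def projK (N : ℕ) (K : ℕ → ℕ → ℝ) : ℕ → ℕ → ℝ := fun a b =>
  if 1 ≤ a ∧ a ≤ N then
    (if b ≤ N then
      (if K (N + 1) (N + 1) < 1 then
        K a b + K a (N + 1) * K (N + 1) b / (1 - K (N + 1) (N + 1))
      else if b = 0 then K a 0 + K a (N + 1)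
      else K a b)
    else 0)
  else if a = b then 1 else 0

/-- Membership in the space 𝓚 of virtual transition matrices (indexed by ℕ = {1,2,...}
as `ℕ+`). -/
def MemVTM (K : ℕ+ → ℕ → ℕ → ℝ) : Prop :=
  (∀ N : ℕ+, MemKN N (K N)) ∧ ∀ N : ℕ+, projK N (K (N + 1)) = K N

/-- The constants C^K_{N,a} (with `C^K_{0,0} = 0` by convention). -/
noncomputable def Ccoef (K : ℕ+ → ℕ → ℕ → ℝ) (N a : ℕ) : ℝ :=
  if N = 0 then 0
  else if K N.succPNat (N + 1) (N + 1) < 1 then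
    K N.succPNat (N + 1) a / (1 - K N.succPNat (N + 1) (N + 1))
  else if a = 0 then 1 else 0

/-- Compatibility of a virtual distribution with a virtual transition matrix:
ν_N(a) = ν_{N+1}(a) + ν_{N+1}(N+1)·C^K_{N,a} for all N and all a ∈ {0,...,N}. -/
def Compatible (ν : ℕ+ → ℕ → ℝ) (K : ℕ+ → ℕ → ℕ → ℝ) : Prop :=
  ∀ (N : ℕ+) (a : ℕ), a ≤ (N : ℕ) →
    ν N a = ν (N + 1) a + ν (N + 1) ((N : ℕ) + 1) * Ccoef K (N : ℕ) a

/-- Membership in the space 𝓓₁ of virtual distributions: a sequence of probability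
measures ν_N on {0,...,N} (identified with their vectors of point masses, extended by 0)
with ν_N(a) ≥ ν_{N+1}(a) for a ∈ {0,...,N}. -/
def MemD1 (ν : ℕ+ → ℕ → ℝ) : Prop :=
  (∀ (N : ℕ+) (a : ℕ), 0 ≤ ν N a) ∧
  (∀ N : ℕ+, ∑ a ∈ Finset.range ((N : ℕ) + 1), ν N a = 1) ∧
  (∀ (N : ℕ+) (a : ℕ), (N : ℕ) < a → ν N a = 0) ∧
  (∀ (N : ℕ+) (a : ℕ), a ≤ (N : ℕ) → ν (N + 1) a ≤ ν N a)

/-- 𝓓₁(K): the set of virtual distributions compatible with `K`. -/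
def D1K (K : ℕ+ → ℕ → ℕ → ℝ) : Set (ℕ+ → ℕ → ℝ) :=
  {ν | MemD1 ν ∧ Compatible ν K}

/-!
Compatibility says that `ν_N` is obtained from `ν_{N+1}` by redistributing the mass at `N + 1` over
`{0, ..., N}` according to `C^K_{N,·}`. A distribution on `{0, ..., M}` is fixed by these
redistributions at every level `N ≥ M`, so prescribing it there determines all lower levels, and
redistributing along probability weights keeps each `ν_N` a probability measure.
-/

theorem forall_pnat_of_succ {P : ℕ+ → Prop} (M : ℕ) (large : ∀ N : ℕ+, M ≤ N → P N)
    (step : ∀ N, P (N + 1) → P N) (N : ℕ+) : P N := by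
  suffices descent : ∀ (d : ℕ) (N : ℕ+), M ≤ N + d → P N from
    descent M N (Nat.le_add_left M N)
  intro d
  induction d with
  | zero => exact large
  | succ d ih => exact fun N hN ↦ step N (ih (N + 1) (by rw [PNat.add_coe, PNat.one_coe]; lia))

theorem existsUnique_backward_orbit {X : Type*} (p : ℕ+ → X → X) (M : ℕ) (x₀ : X)
    (fixed : ∀ N : ℕ+, M ≤ N → p N x₀ = x₀) :
    ∃! x : ℕ+ → X, (∀ N, x N = p N (x (N + 1))) ∧ ∀ N : ℕ+, M ≤ N → x N = x₀ := by
  let T : (ℕ+ → X) → ℕ+ → X := fun x N ↦ p N (x (N + 1))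
  let orbit : ℕ → ℕ+ → X := fun d ↦ T^[d] fun _ ↦ x₀
  have orbit_succ (d : ℕ) (N : ℕ+) : orbit (d + 1) N = p N (orbit d (N + 1)) :=
    congrFun (Function.iterate_succ_apply' T d _) N
  have orbit_stable (d : ℕ) : ∀ N : ℕ+, M ≤ N + d → orbit (d + 1) N = orbit d N := by
    induction d with
    | zero => exact fixed
    | succ d ih =>
      intro N hN
      rw [orbit_succ, ih (N + 1) (by rw [PNat.add_coe, PNat.one_coe]; lia), ← orbit_succ]
  have orbit_top (d : ℕ) : ∀ N : ℕ+, M ≤ N → orbit d N = x₀ := by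
    induction d with
    | zero => exact fun _ _ ↦ rfl
    | succ d ih => exact fun N hN ↦ (orbit_stable d N (by lia)).trans (ih N hN)
  have orbit_rec (N : ℕ+) : orbit M N = p N (orbit M (N + 1)) := by
    rw [← orbit_succ, orbit_stable M N (Nat.le_add_left M N)]
  refine ⟨orbit M, ⟨orbit_rec, orbit_top M⟩, fun y ⟨y_rec, y_top⟩ ↦ funext ?_⟩
  refine forall_pnat_of_succ M (fun N hN ↦ ?_) fun N eq_succ ↦ ?_
  · rw [y_top N hN, orbit_top M N hN]
  · rw [y_rec N, eq_succ, ← orbit_rec]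

/-- `μ` is the vector of point masses, extended by zero, of a probability measure on
`{0, ..., N}`. -/
structure IsDistribution (N : ℕ) (μ : ℕ → ℝ) : Prop where
  nonneg : ∀ a, 0 ≤ μ a
  sum_eq_one : ∑ a ∈ Finset.range (N + 1), μ a = 1
  eq_zero_of_lt : ∀ a, N < a → μ a = 0

/-- The redistribution of the mass of `μ` at `N + 1` over `{0, ..., N}` with weights `c`. The values
of `c` above `N` are ignored, since `C^K_{N,·}` need not vanish there. -/
def redistribute (N : ℕ) (c μ : ℕ → ℝ) (a : ℕ) : ℝ :=
  if a ≤ N then μ a + μ (N + 1) * c a else 0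

namespace IsDistribution

variable {M N : ℕ} {μ c : ℕ → ℝ}

theorem mono (hμ : IsDistribution M μ) (hMN : M ≤ N) : IsDistribution N μ where
  nonneg := hμ.nonneg
  sum_eq_one := by
    rw [← hμ.sum_eq_one]
    refine (Finset.sum_subset (Finset.range_mono (by lia)) fun a _ ha ↦ ?_).symm
    exact hμ.eq_zero_of_lt a (by simpa using ha)
  eq_zero_of_lt a ha := hμ.eq_zero_of_lt a (hMN.trans_lt ha)

theorem single_one (M : ℕ) : IsDistribution M (Pi.single M 1) where
  nonneg := (Pi.single_nonneg.2 zero_le_one : (0 : ℕ → ℝ) ≤ Pi.single M 1)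
  sum_eq_one := by simp
  eq_zero_of_lt _ ha := Pi.single_eq_of_ne ha.ne' 1

theorem redistribute_eq_self (hμ : IsDistribution N μ) (c : ℕ → ℝ) :
    redistribute N c μ = μ := by
  ext a
  by_cases ha : a ≤ N
  · rw [redistribute, if_pos ha, hμ.eq_zero_of_lt (N + 1) N.lt_succ_self, zero_mul, add_zero]
  · rw [redistribute, if_neg ha, hμ.eq_zero_of_lt a (not_le.1 ha)]

protected theorem redistribute (hμ : IsDistribution (N + 1) μ) (c_nonneg : ∀ a ≤ N, 0 ≤ c a)
    (c_sum : ∑ a ∈ Finset.range (N + 1), c a = 1) :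
    IsDistribution N (redistribute N c μ) where
  nonneg a := by
    unfold redistribute
    split_ifs with ha
    · exact add_nonneg (hμ.nonneg a) (mul_nonneg (hμ.nonneg _) (c_nonneg a ha))
    · exact le_rfl
  sum_eq_one := calc
    ∑ a ∈ Finset.range (N + 1), redistribute N c μ a
      = ∑ a ∈ Finset.range (N + 1), (μ a + μ (N + 1) * c a) :=
        Finset.sum_congr rfl fun a ha ↦ if_pos (Finset.mem_range_succ_iff.1 ha)
    _ = ∑ a ∈ Finset.range (N + 1), μ a + μ (N + 1) := by
        rw [Finset.sum_add_distrib, ← Finset.mul_sum, c_sum, mul_one]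
    _ = 1 := by rw [← Finset.sum_range_succ, hμ.sum_eq_one]
  eq_zero_of_lt _ ha := if_neg ha.not_ge

end IsDistribution

theorem MemVTM.isDistribution_row {K : ℕ+ → ℕ → ℕ → ℝ} (hK : MemVTM K) (N : ℕ+) {a : ℕ}
    (ha : a ≤ N) : IsDistribution N (K N a) := by
  have row_support (b : ℕ) (hb : N < b) : K N a b = 0 := by
    rw [← hK.2 N, projK]
    split_ifs <;> first | rfl | lia
  refine ⟨(hK.1 N).1.1 a, ?_, row_support⟩
  refine (hasSum_sum_of_ne_finset_zero fun b hb ↦ row_support b ?_).unique ((hK.1 N).1.2 a)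
  simpa using hb

section Compatible

variable {K : ℕ+ → ℕ → ℕ → ℝ} {N : ℕ+}

theorem Ccoef_coe_pnat (K : ℕ+ → ℕ → ℕ → ℝ) (N : ℕ+) (a : ℕ) :
    Ccoef K N a = if K (N + 1) (N + 1) (N + 1) < 1
      then K (N + 1) (N + 1) a / (1 - K (N + 1) (N + 1) (N + 1))
      else if a = 0 then 1 else 0 :=
  if_neg N.ne_zero

theorem Ccoef_nonneg (row_nonneg : ∀ a, 0 ≤ K (N + 1) (N + 1) a) (a : ℕ) :
    0 ≤ Ccoef K N a := by
  rw [Ccoef_coe_pnat]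
  split_ifs with h
  · exact div_nonneg (row_nonneg a) (sub_nonneg.2 h.le)
  · exact zero_le_one
  · exact le_rfl

theorem sum_Ccoef (row_sum : ∑ a ∈ Finset.range (N + 2), K (N + 1) (N + 1) a = 1) :
    ∑ a ∈ Finset.range (N + 1), Ccoef K N a = 1 := by
  simp only [Ccoef_coe_pnat]
  split_ifs with h
  · rw [← Finset.sum_div, div_eq_one_iff_eq (sub_pos.2 h).ne', eq_sub_iff_add_eq,
      ← Finset.sum_range_succ, row_sum]
  · simp

theorem mem_D1K_iff {ν : ℕ+ → ℕ → ℝ} (row_nonneg : ∀ (N : ℕ+) a, 0 ≤ K (N + 1) (N + 1) a) :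
    ν ∈ D1K K ↔ (∀ N : ℕ+, IsDistribution N (ν N)) ∧
      ∀ N : ℕ+, ν N = redistribute N (Ccoef K N) (ν (N + 1)) := by
  constructor
  · rintro ⟨⟨nonneg, sum_eq_one, eq_zero_of_lt, -⟩, compat⟩
    refine ⟨fun N ↦ ⟨nonneg N, sum_eq_one N, eq_zero_of_lt N⟩, fun N ↦ funext fun a ↦ ?_⟩
    unfold redistribute
    split_ifs with ha
    · exact compat N a ha
    · exact eq_zero_of_lt N a (not_le.1 ha)
  · rintro ⟨dist, ν_rec⟩
    have compat : Compatible ν K := fun N a ha ↦ (congrFun (ν_rec N) a).trans (if_pos ha)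
    refine ⟨⟨fun N ↦ (dist N).nonneg, fun N ↦ (dist N).sum_eq_one,
      fun N ↦ (dist N).eq_zero_of_lt, fun N a ha ↦ ?_⟩, compat⟩
    rw [compat N a ha]
    exact le_add_of_nonneg_right <|
      mul_nonneg ((dist (N + 1)).nonneg _) (Ccoef_nonneg (row_nonneg N) a)

end Compatible

theorem exists_unique_deltaK_general (K : ℕ+ → ℕ → ℕ → ℝ)
    (hK : ∀ N : ℕ+, IsDistribution (N + 1) (K (N + 1) (N + 1))) (M : ℕ) {μ : ℕ → ℝ}
    (hμ : IsDistribution M μ) :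
    ∃! ν : ℕ+ → ℕ → ℝ, ν ∈ D1K K ∧ ∀ N : ℕ+, M ≤ (N : ℕ) → ν N = μ := by
  have row_nonneg (N : ℕ+) : ∀ a, 0 ≤ K (N + 1) (N + 1) a := (hK N).nonneg
  obtain ⟨ν, ⟨ν_rec, ν_top⟩, ν_unique⟩ :=
    existsUnique_backward_orbit (fun N : ℕ+ ↦ redistribute N (Ccoef K N)) M μ
      fun N hN ↦ (hμ.mono hN).redistribute_eq_self _
  have ν_dist : ∀ N : ℕ+, IsDistribution N (ν N) := by
    refine forall_pnat_of_succ M (fun N hN ↦ ν_top N hN ▸ hμ.mono hN) fun N dist_succ ↦ ?_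
    rw [ν_rec N]
    exact dist_succ.redistribute (fun a _ ↦ Ccoef_nonneg (row_nonneg N) a)
      (sum_Ccoef (hK N).sum_eq_one)
  refine ⟨ν, ⟨(mem_D1K_iff row_nonneg).2 ⟨ν_dist, ν_rec⟩, ν_top⟩, fun ν' ⟨mem, top⟩ ↦ ?_⟩
  exact ν_unique ν' ⟨((mem_D1K_iff row_nonneg).1 mem).2, top⟩

/-- For every virtual transition matrix K and every M ∈ ℕ₀ there is a unique
ν ∈ 𝓓₁(K) with ν_N the point mass at M for every N ≥ M. -/
theorem exists_unique_deltaK (K : ℕ+ → ℕ → ℕ → ℝ) (hK : MemVTM K) (M : ℕ) :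
    ∃! ν : ℕ+ → ℕ → ℝ, ν ∈ D1K K ∧
      ∀ N : ℕ+, M ≤ (N : ℕ) → ∀ a : ℕ, ν N a = if a = M then 1 else 0 := by
  simpa only [funext_iff, Pi.single_apply] using exists_unique_deltaK_general K
    (fun N ↦ hK.isDistribution_row (N + 1) le_rfl) M (IsDistribution.single_one M)
end

section
/- For every virtual transition matrix K ∈ 𝓚 and every M ∈ ℕ₀, the virtual distribution δ_M^K is an extreme point of the convex set 𝓓₁(K); that is, the set of extreme points of 𝓓₁(K) contains {δ_M^K : M ∈ ℕ₀}. -/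
/-!
Compatibility writes level `N` of a virtual distribution in terms of level `N + 1`, so an element of
`𝓓₁(K)` is determined by any unbounded set of its levels. Taking a level is linear, so extremality
of unboundedly many levels among probability vectors passes to the whole sequence, and point
masses are extreme among probability vectors.
-/

/-- The probability vectors on `ι`, as a subset of the space `ι → ℝ` of all functions. The
distributions on `{0, …, N}` for different `N` are all regarded as elements of
`probabilityVectors ℕ`, so that extremality can be compared across levels. -/
def probabilityVectors (ι : Type*) : Set (ι → ℝ) :=
  {p | (∀ i, 0 ≤ p i) ∧ HasSum p 1}

theorem eq_single_of_mem_probabilityVectors {ι : Type*} [DecidableEq ι] {p : ι → ℝ} {i : ι}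
    (hp : p ∈ probabilityVectors ι) (hzero : ∀ j ≠ i, p j = 0) : p = Pi.single i 1 := by
  have hone : p i = 1 := (hasSum_single i hzero).unique hp.2
  ext j
  obtain rfl | hj := eq_or_ne j i
  · rw [hone, Pi.single_eq_same]
  · rw [hzero j hj, Pi.single_eq_of_ne hj]

theorem single_mem_probabilityVectors {ι : Type*} [DecidableEq ι] (i : ι) :
    Pi.single i 1 ∈ probabilityVectors ι := by
  have hnonneg : (0 : ι → ℝ) ≤ Pi.single i 1 := Pi.single_nonneg.2 zero_le_one
  exact ⟨hnonneg, hasSum_pi_single i 1⟩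

theorem single_mem_extremePoints_probabilityVectors {ι : Type*} [DecidableEq ι] (i : ι) :
    Pi.single i 1 ∈ Set.extremePoints ℝ (probabilityVectors ι) := by
  refine mem_extremePoints_iff_left.2 ⟨single_mem_probabilityVectors i, ?_⟩
  rintro p hp q hq ⟨s, t, hs, ht, -, hpq⟩
  refine eq_single_of_mem_probabilityVectors hp fun j hj => ?_
  have hcomb : s * p j + t * q j = 0 := by
    simpa [Pi.single_eq_of_ne hj] using congrFun hpq j
  have hsp : s * p j = 0 :=
    ((add_eq_zero_iff_of_nonneg (mul_nonneg hs.le (hp.1 j)) (mul_nonneg ht.le (hq.1 j))).1 hcomb).1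
  exact (mul_eq_zero.1 hsp).resolve_left hs.ne'

theorem MemD1.mem_probabilityVectors {ν : ℕ+ → ℕ → ℝ} (hν : MemD1 ν) (N : ℕ+) :
    ν N ∈ probabilityVectors ℕ := by
  obtain ⟨hnonneg, hsum, hsupp, -⟩ := hν
  refine ⟨hnonneg N, ?_⟩
  rw [← hsum N]
  refine hasSum_sum_of_ne_finset_zero fun a ha => hsupp N a ?_
  rw [Finset.mem_range] at ha
  omega

namespace D1K

variable {K : ℕ+ → ℕ → ℕ → ℝ} {μ ν : ℕ+ → ℕ → ℝ}

theorem level_eq_of_level_add_one_eq (hμ : μ ∈ D1K K) (hν : ν ∈ D1K K) {N : ℕ+}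
    (h : μ (N + 1) = ν (N + 1)) : μ N = ν N := by
  obtain ⟨⟨-, -, hμsupp, -⟩, hμcompat⟩ := hμ
  obtain ⟨⟨-, -, hνsupp, -⟩, hνcompat⟩ := hν
  ext a
  obtain ha | ha := le_or_gt a N
  · rw [hμcompat N a ha, hνcompat N a ha, h]
  · rw [hμsupp N a ha, hνsupp N a ha]

theorem antitone_level_eq (hμ : μ ∈ D1K K) (hν : ν ∈ D1K K) :
    Antitone fun N => μ N = ν N :=
  antitone_of_add_one_le fun _ _ => level_eq_of_level_add_one_eq hμ hν

theorem mem_extremePoints_of_frequently (hν : ν ∈ D1K K)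
    (hext : ∃ᶠ N in Filter.atTop, ν N ∈ Set.extremePoints ℝ (probabilityVectors ℕ)) :
    ν ∈ Set.extremePoints ℝ (D1K K) := by
  refine mem_extremePoints_iff_left.2 ⟨hν, ?_⟩
  rintro μ hμ μ' hμ' ⟨s, t, hs, ht, hst, hseg⟩
  ext1 N
  obtain ⟨L, hNL, hL⟩ := Filter.frequently_atTop.1 hext N
  have hsegL : ν L ∈ openSegment ℝ (μ L) (μ' L) := ⟨s, t, hs, ht, hst, congrFun hseg L⟩
  have hlevel : μ L = ν L :=
    (mem_extremePoints_iff_left.1 hL).2 _ (hμ.1.mem_probabilityVectors L)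
      _ (hμ'.1.mem_probabilityVectors L) hsegL
  exact antitone_level_eq hμ hν hNL hlevel

end D1K

/-- For every virtual transition matrix K and every M ∈ ℕ₀, the virtual distribution
δ_M^K (the unique element of 𝓓₁(K) which is the point mass at M at every level N ≥ M)
is an extreme point of 𝓓₁(K). -/
theorem deltaK_extremePoint (K : ℕ+ → ℕ → ℕ → ℝ) (hK : MemVTM K) (M : ℕ)
    (ν : ℕ+ → ℕ → ℝ) (hν : ν ∈ D1K K)
    (hδ : ∀ N : ℕ+, M ≤ (N : ℕ) → ∀ a : ℕ, ν N a = if a = M then 1 else 0) :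
    ν ∈ Set.extremePoints ℝ (D1K K) := by
  have hlevel : ∀ N ≥ M.succPNat, ν N = Pi.single M 1 := fun N hN => by
    have hMN : M ≤ (N : ℕ) := (Nat.le_succ M).trans ((PNat.coe_le_coe _ _).2 hN)
    ext a
    rw [hδ N hMN a, Pi.single_apply]
  refine D1K.mem_extremePoints_of_frequently hν (Filter.Eventually.frequently ?_)
  filter_upwards [Filter.eventually_ge_atTop M.succPNat] with N hN
  rw [hlevel N hN]
  exact single_mem_extremePoints_probabilityVectors M
end

section
/- Let K = (K_N) and K' = (K'_N) be two elements of the virtual Birkhoff polytope 𝓑. Then the set {α ∈ [0,1] : (1−α)K + αK' ∈ 𝓑} equals [0,1] if for every N ∈ ℕ at least one of the following holds: (i) K_{N+1}(N+1,N+1) = 1; (ii) K'_{N+1}(N+1,N+1) = 1; (iii) K_{N+1}(N+1,N+1) < 1, K'_{N+1}(N+1,N+1) < 1, and K_{N+1}(a,N+1)/(1−K_{N+1}(N+1,N+1)) = K'_{N+1}(a,N+1)/(1−K'_{N+1}(N+1,N+1)) for all a ∈ {1,...,N}; (iv) K_{N+1}(N+1,N+1) < 1, K'_{N+1}(N+1,N+1)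 < 1, and K_{N+1}(N+1,b)/(1−K_{N+1}(N+1,N+1)) = K'_{N+1}(N+1,b)/(1−K'_{N+1}(N+1,N+1)) for all b ∈ {1,...,N}. And the set {α ∈ [0,1] : (1−α)K + αK' ∈ 𝓑} equals {0,1} if there is some N ∈ ℕ for which none of (i)–(iv) holds. -/
/-- Membership in ℬ_N: K ∈ 𝒦_N with K(a,0) = 0 for a ∈ {1,...,N} and with doubly
stochastic restriction to {1,...,N} × {1,...,N}. -/
def MemBN (N : ℕ) (K : ℕ → ℕ → ℝ) : Prop :=
  MemKN N K ∧ (∀ a : ℕ, 1 ≤ a → a ≤ N → K a 0 = 0) ∧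
  (∀ a : ℕ, 1 ≤ a → a ≤ N → ∑ b ∈ Finset.Icc 1 N, K a b = 1) ∧
  (∀ b : ℕ, 1 ≤ b → b ≤ N → ∑ a ∈ Finset.Icc 1 N, K a b = 1)

/-- Membership in the virtual Birkhoff polytope 𝓑: virtual transition matrices which are
levelwise doubly stochastic. -/
def MemVB (K : ℕ+ → ℕ → ℕ → ℝ) : Prop :=
  MemVTM K ∧ ∀ N : ℕ+, MemBN N (K N)

/-- The condition, at level N, under which convex combinations of K and K'"'"' remain in the
virtual Birkhoff polytope: (i) ∨ (ii) ∨ (iii) ∨ (iv). -/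
def GoodLevel (K K' : ℕ+ → ℕ → ℕ → ℝ) (N : ℕ+) : Prop :=
  K (N + 1) ((N : ℕ) + 1) ((N : ℕ) + 1) = 1 ∨
  K' (N + 1) ((N : ℕ) + 1) ((N : ℕ) + 1) = 1 ∨
  (K (N + 1) ((N : ℕ) + 1) ((N : ℕ) + 1) < 1 ∧ K' (N + 1) ((N : ℕ) + 1) ((N : ℕ) + 1) < 1 ∧
    ∀ a : ℕ, 1 ≤ a → a ≤ (N : ℕ) →
      K (N + 1) a ((N : ℕ) + 1) / (1 - K (N + 1) ((N : ℕ) + 1) ((N : ℕ) + 1)) =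
      K' (N + 1) a ((N : ℕ) + 1) / (1 - K' (N + 1) ((N : ℕ) + 1) ((N : ℕ) + 1))) ∨
  (K (N + 1) ((N : ℕ) + 1) ((N : ℕ) + 1) < 1 ∧ K' (N + 1) ((N : ℕ) + 1) ((N : ℕ) + 1) < 1 ∧
    ∀ b : ℕ, 1 ≤ b → b ≤ (N : ℕ) →
      K (N + 1) ((N : ℕ) + 1) b / (1 - K (N + 1) ((N : ℕ) + 1) ((N : ℕ) + 1)) =
      K' (N + 1) ((N : ℕ) + 1) b / (1 - K' (N + 1) ((N : ℕ) + 1) ((N : ℕ) + 1)))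

/-- The `n`-th column of a transition matrix, rescaled by the probability of leaving the state `n`;
this is the quantity in condition (iii). It is `0` when `n` is absorbing, by the convention
`x / 0 = 0`. -/
noncomputable def normalizedCol (M : ℕ → ℕ → ℝ) (n a : ℕ) : ℝ :=
  M a n / (1 - M n n)

/-- For `b ≠ n`, the probability that a chain leaving the state `n` jumps to `b`; this is the
quantity in condition (iv). It is `0` when `n` is absorbing, by the convention `x / 0 = 0`. -/
noncomputable def normalizedRow (M : ℕ → ℕ → ℝ) (n b : ℕ) : ℝ :=
  M n b / (1 - M n n)

theorem weightedSum_mul_weightedMean {F : Type*} [Field F] {p q : F} (hpq : p + q = 0 → p = 0)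
    (x x' y y' : F) :
    (p * x + q * x') * ((p * y + q * y') / (p + q)) =
      p * x * y + q * x' * y' - p * q / (p + q) * (x - x') * (y - y') := by
  by_cases h : p + q = 0
  · obtain rfl := hpq h
    obtain rfl : q = 0 := by simpa using h
    simp
  · field_simp
    ring

theorem convex_setOf_isStochastic : Convex ℝ {M | IsStochastic M} := by
  intro M hM M' hM' s t hs ht hst
  refine ⟨fun a b => ?_, fun a => ?_⟩
  · exact add_nonneg (mul_nonneg hs (hM.1 a b)) (mul_nonneg ht (hM'.1 a b))
  · have hsum : HasSum ((s • M + t • M') a) (s • 1 + t • 1) :=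
      ((hM.2 a).const_smul s).add ((hM'.2 a).const_smul t)
    simpa only [smul_eq_mul, mul_one, hst] using hsum

theorem convex_setOf_memKN (N : ℕ) : Convex ℝ {M | MemKN N M} := by
  intro M hM M' hM' s t hs ht hst
  refine ⟨convex_setOf_isStochastic hM.1 hM'.1 hs ht hst, fun a ha => ?_⟩
  simp [hM.2 a ha, hM'.2 a ha, hst]

theorem convex_setOf_memBN (N : ℕ) : Convex ℝ {M | MemBN N M} := by
  rintro M ⟨hM, hzero, hrow, hcol⟩ M' ⟨hM', hzero', hrow', hcol'⟩ s t hs ht hst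
  refine ⟨convex_setOf_memKN N hM hM' hs ht hst, fun a ha haN => ?_, fun a ha haN => ?_,
    fun b hb hbN => ?_⟩
  · simp [hzero a ha haN, hzero' a ha haN]
  · simp [Finset.sum_add_distrib, ← Finset.mul_sum, hrow a ha haN, hrow' a ha haN, hst]
  · simp [Finset.sum_add_distrib, ← Finset.mul_sum, hcol b hb hbN, hcol' b hb hbN, hst]

namespace IsStochastic

variable {M M' : ℕ → ℕ → ℝ} {n b : ℕ}

theorem apply_le_one (hM : IsStochastic M) (a b : ℕ) : M a b ≤ 1 :=
  le_hasSum (hM.2 a) b fun i _ => hM.1 a i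

theorem row_apply_le_one_sub (hM : IsStochastic M) (hb : b ≠ n) : M n b ≤ 1 - M n n := by
  have hsum := sum_le_hasSum {b, n} (fun i _ => hM.1 n i) (hM.2 n)
  rw [Finset.sum_pair hb] at hsum
  linarith

theorem one_sub_mul_normalizedRow (hM : IsStochastic M) (hb : b ≠ n) :
    (1 - M n n) * normalizedRow M n b = M n b :=
  mul_div_cancel_of_imp' fun h => le_antisymm (h ▸ hM.row_apply_le_one_sub hb) (hM.1 n b)

theorem normalizedRow_convexComb (hM : IsStochastic M) (hM' : IsStochastic M') {s t : ℝ}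
    (hst : s + t = 1) (hb : b ≠ n) :
    normalizedRow (s • M + t • M') n b =
      (s * (1 - M n n) * normalizedRow M n b + t * (1 - M' n n) * normalizedRow M' n b) /
        (s * (1 - M n n) + t * (1 - M' n n)) := by
  have hden : 1 - (s * M n n + t * M' n n) = s * (1 - M n n) + t * (1 - M' n n) := by
    linear_combination -hst
  rw [mul_assoc, mul_assoc, hM.one_sub_mul_normalizedRow hb, hM'.one_sub_mul_normalizedRow hb,
    ← hden]
  rfl

end IsStochastic

theorem projK_apply_of_notMem {N a : ℕ} (ha : a ∉ Finset.Icc 1 N) (M : ℕ → ℕ → ℝ) (b : ℕ) :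
    projK N M a b = if a = b then 1 else 0 := by
  rw [projK, if_neg (Finset.mem_Icc.not.1 ha)]

theorem projK_apply_of_lt {N a b : ℕ} (ha : a ∈ Finset.Icc 1 N) (hb : N < b) (M : ℕ → ℕ → ℝ) :
    projK N M a b = 0 := by
  rw [projK, if_pos (Finset.mem_Icc.1 ha), if_neg hb.not_ge]

namespace MemBN

variable {N n a b : ℕ} {M M' : ℕ → ℕ → ℝ}

theorem isStochastic (hM : MemBN N M) : IsStochastic M :=
  hM.1.1

theorem col_apply_le_one_sub (hM : MemBN N M) (hn : n ∈ Finset.Icc 1 N) (ha : a ∈ Finset.Icc 1 N)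
    (han : a ≠ n) : M a n ≤ 1 - M n n := by
  have hsum : ∑ i ∈ Finset.Icc 1 N, M i n = 1 :=
    hM.2.2.2 n (Finset.mem_Icc.1 hn).1 (Finset.mem_Icc.1 hn).2
  have hpair : ∑ i ∈ {a, n}, M i n ≤ ∑ i ∈ Finset.Icc 1 N, M i n :=
    Finset.sum_le_sum_of_subset_of_nonneg (by simp [Finset.insert_subset_iff, ha, hn])
      fun i _ _ => hM.isStochastic.1 i n
  rw [Finset.sum_pair han] at hpair
  linarith

theorem one_sub_mul_normalizedCol (hM : MemBN N M) (hn : n ∈ Finset.Icc 1 N)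
    (ha : a ∈ Finset.Icc 1 N) (han : a ≠ n) : (1 - M n n) * normalizedCol M n a = M a n :=
  mul_div_cancel_of_imp' fun h =>
    le_antisymm (h ▸ hM.col_apply_le_one_sub hn ha han) (hM.isStochastic.1 a n)

theorem one_sub_mul_normalizedCol_last (hM : MemBN (N + 1) M) (ha : a ∈ Finset.Icc 1 N) :
    (1 - M (N + 1) (N + 1)) * normalizedCol M (N + 1) a = M a (N + 1) := by
  rw [Finset.mem_Icc] at ha
  exact hM.one_sub_mul_normalizedCol (by simp) (Finset.mem_Icc.2 ⟨ha.1, by omega⟩) (by omega)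

theorem normalizedRow_zero (hM : MemBN N M) (hn : n ∈ Finset.Icc 1 N) :
    normalizedRow M n 0 = 0 := by
  simp [normalizedRow, hM.2.1 n (Finset.mem_Icc.1 hn).1 (Finset.mem_Icc.1 hn).2]

theorem projK_apply (hM : MemBN (N + 1) M) (ha : a ∈ Finset.Icc 1 N) (hb : b ≤ N) :
    projK N M a b = M a b + M a (N + 1) * normalizedRow M (N + 1) b := by
  rw [projK, if_pos (Finset.mem_Icc.1 ha), if_pos hb]
  split_ifs with hlt hb0
  · rw [normalizedRow, mul_div_assoc]
  all_goals
    have habs : M (N + 1) (N + 1) = 1 :=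
      le_antisymm (hM.isStochastic.apply_le_one _ _) (not_lt.1 hlt)
    have hcol : M a (N + 1) = 0 := by
      rw [← hM.one_sub_mul_normalizedCol_last ha, habs, sub_self, zero_mul]
    simp [hcol, hb0]

theorem projK_convexComb_apply (hM : MemBN (N + 1) M) (hM' : MemBN (N + 1) M') {s t : ℝ}
    (hs : 0 ≤ s) (ht : 0 ≤ t) (hst : s + t = 1) (ha : a ∈ Finset.Icc 1 N) (hb : b ≤ N) :
    projK N (s • M + t • M') a b = (s • projK N M + t • projK N M') a b -
      s * (1 - M (N + 1) (N + 1)) * (t * (1 - M' (N + 1) (N + 1))) /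
          (s * (1 - M (N + 1) (N + 1)) + t * (1 - M' (N + 1) (N + 1))) *
        (normalizedCol M (N + 1) a - normalizedCol M' (N + 1) a) *
        (normalizedRow M (N + 1) b - normalizedRow M' (N + 1) b) := by
  have hC : MemBN (N + 1) (s • M + t • M') := convex_setOf_memBN _ hM hM' hs ht hst
  have hp : 0 ≤ s * (1 - M (N + 1) (N + 1)) :=
    mul_nonneg hs (sub_nonneg.2 (hM.isStochastic.apply_le_one _ _))
  have hq : 0 ≤ t * (1 - M' (N + 1) (N + 1)) :=
    mul_nonneg ht (sub_nonneg.2 (hM'.isStochastic.apply_le_one _ _))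
  rw [hC.projK_apply ha hb, hM.isStochastic.normalizedRow_convexComb hM'.isStochastic hst
    (show b ≠ N + 1 by lia)]
  simp only [Pi.add_apply, Pi.smul_apply, smul_eq_mul, hM.projK_apply ha hb,
    hM'.projK_apply ha hb, ← hM.one_sub_mul_normalizedCol_last ha,
    ← hM'.one_sub_mul_normalizedCol_last ha]
  linear_combination weightedSum_mul_weightedMean
    (p := s * (1 - M (N + 1) (N + 1))) (q := t * (1 - M' (N + 1) (N + 1)))
    (fun h => ((add_eq_zero_iff_of_nonneg hp hq).1 h).1)
    (normalizedCol M (N + 1) a) (normalizedCol M' (N + 1) a)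
    (normalizedRow M (N + 1) b) (normalizedRow M' (N + 1) b)

theorem projK_convexComb_apply_eq_iff (hM : MemBN (N + 1) M) (hM' : MemBN (N + 1) M') {s t : ℝ}
    (hs : 0 < s) (ht : 0 < t) (hst : s + t = 1) (ha : a ∈ Finset.Icc 1 N) (hb : b ≤ N) :
    projK N (s • M + t • M') a b = (s • projK N M + t • projK N M') a b ↔
      M (N + 1) (N + 1) = 1 ∨ M' (N + 1) (N + 1) = 1 ∨
        normalizedCol M (N + 1) a = normalizedCol M' (N + 1) a ∨
        normalizedRow M (N + 1) b = normalizedRow M' (N + 1) b := by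
  have hp : 0 ≤ s * (1 - M (N + 1) (N + 1)) :=
    mul_nonneg hs.le (sub_nonneg.2 (hM.isStochastic.apply_le_one _ _))
  have hq : 0 ≤ t * (1 - M' (N + 1) (N + 1)) :=
    mul_nonneg ht.le (sub_nonneg.2 (hM'.isStochastic.apply_le_one _ _))
  rw [hM.projK_convexComb_apply hM' hs.le ht.le hst ha hb, sub_eq_self]
  simp only [mul_eq_zero, div_eq_zero_iff, add_eq_zero_iff_of_nonneg hp hq, hs.ne', ht.ne',
    sub_eq_zero, eq_comm (a := (1 : ℝ))]
  tauto

theorem projK_convexComb_eq_iff (hM : MemBN (N + 1) M) (hM' : MemBN (N + 1) M') {s t : ℝ}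
    (hs : 0 < s) (ht : 0 < t) (hst : s + t = 1) :
    projK N (s • M + t • M') = s • projK N M + t • projK N M' ↔
      ∀ a ∈ Finset.Icc 1 N, ∀ b ∈ Finset.Icc 1 N,
        M (N + 1) (N + 1) = 1 ∨ M' (N + 1) (N + 1) = 1 ∨
          normalizedCol M (N + 1) a = normalizedCol M' (N + 1) a ∨
          normalizedRow M (N + 1) b = normalizedRow M' (N + 1) b := by
  refine ⟨fun h a ha b hb => ?_, fun h => funext₂ fun a b => ?_⟩
  · rw [← hM.projK_convexComb_apply_eq_iff hM' hs ht hst ha (Finset.mem_Icc.1 hb).2, h]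
  · by_cases ha : a ∈ Finset.Icc 1 N
    · rcases lt_or_ge N b with hb | hb
      · simp [projK_apply_of_lt ha hb]
      · rw [hM.projK_convexComb_apply_eq_iff hM' hs ht hst ha hb]
        rcases Nat.eq_zero_or_pos b with rfl | hb0
        · simp [hM.normalizedRow_zero, hM'.normalizedRow_zero]
        · exact h a ha b (Finset.mem_Icc.2 ⟨hb0, hb⟩)
    · simp only [Pi.add_apply, Pi.smul_apply, projK_apply_of_notMem ha]
      split_ifs <;> simp [hst]

end MemBN

theorem goodLevel_iff {K K' : ℕ+ → ℕ → ℕ → ℝ} {N : ℕ+}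
    (hle : K (N + 1) (N + 1) (N + 1) ≤ 1) (hle' : K' (N + 1) (N + 1) (N + 1) ≤ 1) :
    GoodLevel K K' N ↔ ∀ a ∈ Finset.Icc 1 (N : ℕ), ∀ b ∈ Finset.Icc 1 (N : ℕ),
      K (N + 1) (N + 1) (N + 1) = 1 ∨ K' (N + 1) (N + 1) (N + 1) = 1 ∨
        normalizedCol (K (N + 1)) (N + 1) a = normalizedCol (K' (N + 1)) (N + 1) a ∨
        normalizedRow (K (N + 1)) (N + 1) b = normalizedRow (K' (N + 1)) (N + 1) b := by
  simp only [Finset.mem_Icc]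
  refine ⟨?_, fun h => ?_⟩
  · rintro (hone | hone | ⟨-, -, hcol⟩ | ⟨-, -, hrow⟩) a ha b hb
    · exact .inl hone
    · exact .inr (.inl hone)
    · exact .inr (.inr (.inl (hcol a ha.1 ha.2)))
    · exact .inr (.inr (.inr (hrow b hb.1 hb.2)))
  · by_contra hbad
    simp only [GoodLevel, not_or, not_and, not_forall] at hbad
    obtain ⟨hne, hne', hcol, hrow⟩ := hbad
    have hlt := hle.lt_of_ne hne
    have hlt' := hle'.lt_of_ne hne'
    obtain ⟨a, ha, haN, hcol⟩ := hcol hlt hlt'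
    obtain ⟨b, hb, hbN, hrow⟩ := hrow hlt hlt'
    rcases h a ⟨ha, haN⟩ b ⟨hb, hbN⟩ with h | h | h | h
    exacts [hne h, hne' h, hcol h, hrow h]

theorem memVB_iff {K : ℕ+ → ℕ → ℕ → ℝ} :
    MemVB K ↔ (∀ N : ℕ+, MemBN N (K N)) ∧ ∀ N : ℕ+, projK N (K (N + 1)) = K N :=
  ⟨fun h => ⟨h.2, h.1.2⟩, fun h => ⟨⟨fun N => (h.1 N).1, h.2⟩, h.1⟩⟩

theorem MemVB.convexComb_iff {K K' : ℕ+ → ℕ → ℕ → ℝ} (hK : MemVB K) (hK' : MemVB K') {s t : ℝ}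
    (hs : 0 < s) (ht : 0 < t) (hst : s + t = 1) :
    MemVB (s • K + t • K') ↔ ∀ N, GoodLevel K K' N := by
  have hmem (N : ℕ+) : MemBN N ((s • K + t • K') N) :=
    convex_setOf_memBN N (hK.2 N) (hK'.2 N) hs.le ht.le hst
  rw [memVB_iff, and_iff_right hmem]
  refine forall_congr' fun N => ?_
  have hN : MemBN (N + 1) (K (N + 1)) := hK.2 (N + 1)
  have hN' : MemBN (N + 1) (K' (N + 1)) := hK'.2 (N + 1)
  rw [goodLevel_iff (hN.isStochastic.apply_le_one _ _) (hN'.isStochastic.apply_le_one _ _),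
    ← hN.projK_convexComb_eq_iff hN' hs ht hst, hK.1.2, hK'.1.2]
  rfl

theorem MemVB.convexComb_iff_of_mem_Icc {K K' : ℕ+ → ℕ → ℕ → ℝ} (hK : MemVB K) (hK' : MemVB K')
    {α : ℝ} (hα : α ∈ Set.Icc (0 : ℝ) 1) :
    MemVB ((1 - α) • K + α • K') ↔ α = 0 ∨ α = 1 ∨ ∀ N, GoodLevel K K' N := by
  rcases hα.1.eq_or_lt with rfl | hα0
  · simpa using hK
  rcases hα.2.eq_or_lt with rfl | hα1
  · simpa using hK'
  rw [hK.convexComb_iff hK' (sub_pos.2 hα1) hα0 (sub_add_cancel 1 α)]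
  simp [hα0.ne', hα1.ne]

/-- All-or-nothing convexity of the virtual Birkhoff polytope: for K, K'"'"' ∈ 𝓑, the set of
α ∈ [0,1] with (1−α)K + αK'"'"' ∈ 𝓑 equals [0,1] if every level satisfies one of conditions
(i)–(iv), and equals {0,1} if some level satisfies none of them. -/
theorem virtualBirkhoff_convexity (K K' : ℕ+ → ℕ → ℕ → ℝ)
    (hK : MemVB K) (hK' : MemVB K') :
    ((∀ N : ℕ+, GoodLevel K K' N) →
      {α : ℝ | α ∈ Set.Icc (0 : ℝ) 1 ∧
          MemVB fun N a b => (1 - α) * K N a b + α * K' N a b}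
        = Set.Icc (0 : ℝ) 1) ∧
    ((∃ N : ℕ+, ¬GoodLevel K K' N) →
      {α : ℝ | α ∈ Set.Icc (0 : ℝ) 1 ∧
          MemVB fun N a b => (1 - α) * K N a b + α * K' N a b}
        = {0, 1}) := by
  have hmem (α : ℝ) (hα : α ∈ Set.Icc (0 : ℝ) 1) :
      (MemVB fun N a b => (1 - α) * K N a b + α * K' N a b) ↔
        α = 0 ∨ α = 1 ∨ ∀ N, GoodLevel K K' N :=
    hK.convexComb_iff_of_mem_Icc hK' hα
  refine ⟨fun hgood => ?_, fun hbad => ?_⟩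
  · ext α
    exact and_iff_left_of_imp fun hα => (hmem α hα).2 (.inr (.inr hgood))
  · have hsubset : ({0, 1} : Set ℝ) ⊆ Set.Icc 0 1 := by simp [Set.insert_subset_iff]
    ext α
    rw [Set.mem_ofPred_eq, and_congr_right (hmem α), eq_false (not_forall.2 hbad), or_false]
    exact and_iff_right_of_imp fun hα => hsubset hα
end
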